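/- Let p ∈ (0,1/2], r ∈ ℕ with r ≥ 1, and δ > 0. Suppose f : {0,1}^n → {0,1} satisfies I_S(f) ≤ δ for every nonempty S ⊆ [n] with |S| ≤ r. Then f is (r, 4^r·δ)-global. -/

import Mathlib

open Finset

namespace GlobalHC

variable {n : ℕ}

/-- Expectation with respect to the `p`-biased measure on `{0,1}^n`. -/
noncomputable def Ep (p : ℝ) (f : (Fin n → Bool) → ℝ) : ℝ :=
  ∑ x : Fin n → Bool, (∏ i, if x i then p else 1 - p) * f x

/-- The `r`-norm with respect to the `p`-biased measure. -/
noncomputable def pnorm (p r : ℝ) (f : (Fin n → Bool) → ℝ) : ℝ :=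
  (Ep p fun x => |f x| ^ r) ^ (1 / r)

/-- The `p`-biased character `χ_S`. -/
noncomputable def chi (p : ℝ) (S : Finset (Fin n)) (x : Fin n → Bool) : ℝ :=
  ∏ i ∈ S, ((if x i then (1 : ℝ) else 0) - p) / Real.sqrt (p * (1 - p))

/-- The `p`-biased Fourier coefficient `f̂(S)`. -/
noncomputable def coeff (p : ℝ) (f : (Fin n → Bool) → ℝ) (S : Finset (Fin n)) : ℝ :=
  Ep p fun x => f x * chi p S x

/-- The derivative `D_S f = Σ_{T ⊇ S} f̂(T) χ_{T∖S}`. -/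
noncomputable def derivS (p : ℝ) (S : Finset (Fin n)) (f : (Fin n → Bool) → ℝ) :
    (Fin n → Bool) → ℝ :=
  fun x => ∑ T ∈ Finset.univ.filter (fun T => S ⊆ T), coeff p f T * chi p (T \ S) x

/-- The generalised influence `I_S(f) = σ^{-2|S|} Σ_{T ⊇ S} f̂(T)²`. -/
noncomputable def genInf (p : ℝ) (S : Finset (Fin n)) (f : (Fin n → Bool) → ℝ) : ℝ :=
  (∑ T ∈ Finset.univ.filter (fun T => S ⊆ T), coeff p f T ^ 2) / (p * (1 - p)) ^ S.card

/-- The noise operator `T_ρ f = Σ_S ρ^{|S|} f̂(S) χ_S`. -/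
noncomputable def noise (p ρ : ℝ) (f : (Fin n → Bool) → ℝ) : (Fin n → Bool) → ℝ :=
  fun x => ∑ S : Finset (Fin n), ρ ^ S.card * coeff p f S * chi p S x

/-- The degree-`r` truncation `f^{≤ r}`. -/
noncomputable def trunc (p : ℝ) (r : ℕ) (f : (Fin n → Bool) → ℝ) : (Fin n → Bool) → ℝ :=
  fun x => ∑ S ∈ Finset.univ.filter (fun S : Finset (Fin n) => S.card ≤ r),
    coeff p f S * chi p S x

/-- The restriction `f_{J→1}` setting all coordinates in `J` to `1`. -/
def restrict1 (J : Finset (Fin n)) (f : (Fin n → Bool) → ℝ) : (Fin n → Bool) → ℝ :=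
  fun x => f (fun i => if i ∈ J then true else x i)

/-- `f` is `(r,δ)`-global (for the `p`-biased measure). -/
def IsGlobal (p r δ : ℝ) (f : (Fin n → Bool) → ℝ) : Prop :=
  ∀ J : Finset (Fin n), (J.card : ℝ) ≤ r → Ep p (restrict1 J f) ≤ Ep p f + δ

/-- The total influence `I[f] = Σ_i Pr_{μ_p}[f(x ⊕ e_i) ≠ f(x)]`. -/
noncomputable def totalInf (p : ℝ) (f : (Fin n → Bool) → ℝ) : ℝ :=
  ∑ i : Fin n, Ep p fun x => if f (Function.update x i (!x i)) = f x then 0 else 1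

/-- Noise stability `Stab_ρ(f) = Σ_S ρ^{|S|} f̂(S)²` (w.r.t. `μ_p`). -/
noncomputable def stab (p ρ : ℝ) (f : (Fin n → Bool) → ℝ) : ℝ :=
  ∑ S : Finset (Fin n), ρ ^ S.card * coeff p f S ^ 2

/-- `f` is monotone. -/
def Mono (f : (Fin n → Bool) → ℝ) : Prop :=
  ∀ x y : Fin n → Bool, (∀ i, x i ≤ y i) → f x ≤ f y

/-!
The identity `D_{S ∪ {i}} f (x) = σ (D_S f (x_{i → 1}) - D_S f (x_{i → 0}))` shows that the
normalised derivative `σ^{-|S|} D_S f` of an integer-valued `f` is integer-valued. An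
integer-valued function `g` satisfies `g ≤ g ^ 2`, and taking expectations with
`g = σ^{-|S|} D_S f` gives `σ^{-|S|} f̂(S) ≤ I_S(f)`. On the other hand
`μ_p(f_{J → 1}) = ∑_{S ⊆ J} ((1 - p) / σ)^{|S|} f̂(S)`, whose term `S = ∅` is `μ_p(f)` and whose
other terms are at most `(1 - p)^{|S|} I_S(f)`.
-/

lemma sum_powerset_erase_empty_pow_card {ι R : Type*} [DecidableEq ι] [CommRing R] (a : R)
    (s : Finset ι) : ∑ t ∈ s.powerset.erase ∅, a ^ t.card = (1 + a) ^ s.card - 1 := by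
  have h := add_sum_erase s.powerset (fun t => a ^ t.card) (empty_mem_powerset s)
  rw [card_empty, pow_zero] at h
  rw [eq_sub_iff_add_eq', h, ← prod_const, prod_one_add]
  simp only [prod_const]

section Coordinate

/-- The standard deviation `σ = √(p(1 - p))` of a single `p`-biased bit. -/
noncomputable def sigma (p : ℝ) : ℝ :=
  √(p * (1 - p))

/-- The standardised bit `(b - p) / σ`, so that `χ_S(x) = ∏_{i ∈ S} coordChar p (x i)`. -/
noncomputable def coordChar (p : ℝ) (b : Bool) : ℝ :=
  ((if b then 1 else 0) - p) / sigma p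

variable {p : ℝ}

lemma sigma_pos (hp : 0 < p) (hp1 : p < 1) : 0 < sigma p :=
  Real.sqrt_pos.2 (mul_pos hp (sub_pos.2 hp1))

lemma sq_sigma (hp : 0 < p) (hp1 : p < 1) : sigma p ^ 2 = p * (1 - p) :=
  Real.sq_sqrt (mul_pos hp (sub_pos.2 hp1)).le

lemma coordChar_true (p : ℝ) : coordChar p true = (1 - p) / sigma p := by
  simp [coordChar]

lemma coordChar_false (p : ℝ) : coordChar p false = -p / sigma p := by
  simp [coordChar]

lemma coordChar_true_sub_false (p : ℝ) :
    coordChar p true - coordChar p false = 1 / sigma p := by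
  rw [coordChar_true, coordChar_false]
  ring

lemma coordChar_mean (p : ℝ) : p * coordChar p true + (1 - p) * coordChar p false = 0 := by
  rw [coordChar_true, coordChar_false]
  ring

lemma coordChar_mul (hp : 0 < p) (hp1 : p < 1) (b c : Bool) :
    coordChar p b * coordChar p c =
      ((if b then 1 else 0) - p) * ((if c then 1 else 0) - p) / (p * (1 - p)) := by
  rw [coordChar, coordChar, div_mul_div_comm, ← sq (sigma p), sq_sigma hp hp1]

lemma coordChar_variance (hp : 0 < p) (hp1 : p < 1) :
    p * (coordChar p true * coordChar p true) +
      (1 - p) * (coordChar p false * coordChar p false) = 1 := by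
  have hq : 1 - p ≠ 0 := (sub_pos.2 hp1).ne'
  simp only [coordChar_mul hp hp1, if_true, Bool.false_eq_true, if_false]
  field_simp
  ring

lemma weight_mul_one_add_coordChar_mul (hp : 0 < p) (hp1 : p < 1) (b c : Bool) :
    (if b then p else 1 - p) * (1 + coordChar p b * coordChar p c) =
      if b = c then 1 else 0 := by
  have hq : 1 - p ≠ 0 := (sub_pos.2 hp1).ne'
  rw [coordChar_mul hp hp1]
  cases b <;> cases c <;>
    simp only [if_true, Bool.false_eq_true, Bool.true_eq_false, if_false] <;>
    field_simp <;> ring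

end Coordinate

section Expectation

variable {p : ℝ}

lemma Ep_sum {ι : Type*} (p : ℝ) (s : Finset ι) (g : ι → (Fin n → Bool) → ℝ) :
    Ep p (fun x => ∑ k ∈ s, g k x) = ∑ k ∈ s, Ep p (g k) := by
  simp only [Ep, mul_sum]
  exact sum_comm

lemma Ep_const_mul (p c : ℝ) (g : (Fin n → Bool) → ℝ) :
    Ep p (fun x => c * g x) = c * Ep p g := by
  simp only [Ep, mul_sum, mul_left_comm]

lemma Ep_mono (hp : 0 ≤ p) (hp1 : p ≤ 1) {g h : (Fin n → Bool) → ℝ} (hgh : ∀ x, g x ≤ h x) :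
    Ep p g ≤ Ep p h := by
  refine sum_le_sum fun x _ => mul_le_mul_of_nonneg_left (hgh x) (prod_nonneg fun i _ => ?_)
  split_ifs
  exacts [hp, sub_nonneg.2 hp1]

lemma Ep_prod (p : ℝ) (g : Fin n → Bool → ℝ) :
    Ep p (fun x => ∏ i, g i (x i)) = ∏ i, (p * g i true + (1 - p) * g i false) := by
  simp only [Ep, ← prod_mul_distrib]
  rw [← Fintype.prod_sum fun i b => (if b = true then p else 1 - p) * g i b]
  simp

end Expectation

section Character

variable {p : ℝ}

lemma chi_empty (p : ℝ) (x : Fin n → Bool) : chi p ∅ x = 1 :=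
  prod_empty

lemma chi_eq_prod_ite (p : ℝ) (S : Finset (Fin n)) (x : Fin n → Bool) :
    chi p S x = ∏ i, if i ∈ S then coordChar p (x i) else 1 := by
  rw [prod_ite_mem, univ_inter]
  rfl

lemma chi_update_of_notMem (p : ℝ) {S : Finset (Fin n)} {i : Fin n} (hi : i ∉ S)
    (x : Fin n → Bool) (b : Bool) : chi p S (Function.update x i b) = chi p S x :=
  prod_congr rfl fun j hj => by rw [Function.update_of_ne (ne_of_mem_of_not_mem hj hi)]

lemma chi_update_of_mem (p : ℝ) {S : Finset (Fin n)} {i : Fin n} (hi : i ∈ S)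
    (x : Fin n → Bool) (b : Bool) :
    chi p S (Function.update x i b) = coordChar p b * chi p (S.erase i) x := by
  rw [← chi_update_of_notMem p (notMem_erase i S) x b, chi, ← mul_prod_erase S _ hi,
    Function.update_self]
  rfl

lemma Ep_chi_mul_chi (hp : 0 < p) (hp1 : p < 1) (S T : Finset (Fin n)) :
    Ep p (fun x => chi p S x * chi p T x) = if S = T then 1 else 0 := by
  let g (i : Fin n) (b : Bool) : ℝ :=
    (if i ∈ S then coordChar p b else 1) * (if i ∈ T then coordChar p b else 1)
  have hg (i : Fin n) :
      p * g i true + (1 - p) * g i false = if i ∈ S ↔ i ∈ T then 1 else 0 := by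
    by_cases hS : i ∈ S <;> by_cases hT : i ∈ T <;>
      simp [g, hS, hT, coordChar_mean, coordChar_variance hp hp1]
  calc Ep p (fun x => chi p S x * chi p T x) = Ep p (fun x => ∏ i, g i (x i)) := by
        simp only [chi_eq_prod_ite, ← prod_mul_distrib, g]
    _ = ∏ i, if i ∈ S ↔ i ∈ T then 1 else 0 := by simp only [Ep_prod, hg]
    _ = if S = T then 1 else 0 := by simp [prod_ite_zero, Finset.ext_iff]

lemma Ep_chi (hp : 0 < p) (hp1 : p < 1) (S : Finset (Fin n)) :
    Ep p (chi p S) = if S = ∅ then 1 else 0 := by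
  simpa only [chi_empty, mul_one] using Ep_chi_mul_chi hp hp1 S ∅

lemma Ep_sum_chi_sq {ι : Type*} (hp : 0 < p) (hp1 : p < 1) (s : Finset ι)
    (c : ι → ℝ) {A : ι → Finset (Fin n)} (hA : Set.InjOn A s) :
    Ep p (fun x => (∑ k ∈ s, c k * chi p (A k) x) ^ 2) = ∑ k ∈ s, c k ^ 2 := by
  classical
  have hexpand (x : Fin n → Bool) : (∑ k ∈ s, c k * chi p (A k) x) ^ 2 =
      ∑ k ∈ s, ∑ l ∈ s, c k * c l * (chi p (A k) x * chi p (A l) x) := by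
    simp only [sq, sum_mul_sum, mul_mul_mul_comm]
  simp only [hexpand, Ep_sum, Ep_const_mul, Ep_chi_mul_chi hp hp1]
  refine sum_congr rfl fun k hk => ?_
  calc ∑ l ∈ s, c k * c l * (if A k = A l then 1 else 0)
      = ∑ l ∈ s, if k = l then c k * c l else 0 :=
        sum_congr rfl fun l hl => by simp only [hA.eq_iff hk hl, mul_ite, mul_one, mul_zero]
    _ = c k ^ 2 := by rw [sum_ite_eq, if_pos hk, sq]

lemma weight_mul_sum_chi_mul_chi (hp : 0 < p) (hp1 : p < 1) (x y : Fin n → Bool) :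
    (∏ i, if x i then p else 1 - p) * ∑ S, chi p S x * chi p S y = if x = y then 1 else 0 := by
  have hsum : ∑ S, chi p S x * chi p S y = ∏ i, (1 + coordChar p (x i) * coordChar p (y i)) := by
    rw [prod_one_add, powerset_univ]
    exact sum_congr rfl fun S _ => prod_mul_distrib.symm
  rw [hsum, ← prod_mul_distrib]
  simp [weight_mul_one_add_coordChar_mul hp hp1, prod_ite_zero, funext_iff]

lemma sum_coeff_mul_chi (hp : 0 < p) (hp1 : p < 1) (f : (Fin n → Bool) → ℝ)
    (x : Fin n → Bool) : ∑ S, coeff p f S * chi p S x = f x := by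
  calc ∑ S, coeff p f S * chi p S x
      = ∑ y, f y * ((∏ i, if y i then p else 1 - p) * ∑ S, chi p S y * chi p S x) := by
        simp only [coeff, Ep, mul_sum, sum_mul]
        rw [sum_comm]
        exact sum_congr rfl fun y _ => sum_congr rfl fun S _ => by ring
    _ = f x := by simp [weight_mul_sum_chi_mul_chi hp hp1]

lemma coeff_empty (p : ℝ) (f : (Fin n → Bool) → ℝ) : coeff p f ∅ = Ep p f := by
  simp only [coeff, chi_empty, mul_one]

end Character

section Derivative

variable {p : ℝ}

lemma derivS_empty (hp : 0 < p) (hp1 : p < 1) (f : (Fin n → Bool) → ℝ) :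
    derivS p ∅ f = f := by
  funext x
  simpa only [derivS, empty_subset, filter_true, sdiff_empty] using sum_coeff_mul_chi hp hp1 f x

lemma derivS_update_true_sub_update_false (f : (Fin n → Bool) → ℝ) {S : Finset (Fin n)}
    {i : Fin n} (hi : i ∉ S) (x : Fin n → Bool) :
    derivS p S f (Function.update x i true) - derivS p S f (Function.update x i false) =
      derivS p (insert i S) f x / sigma p := by
  have hterm (T : Finset (Fin n)) :
      chi p (T \ S) (Function.update x i true) - chi p (T \ S) (Function.update x i false) =
        if i ∈ T then chi p (T \ insert i S) x / sigma p else 0 := by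
    split_ifs with hT
    · have hmem : i ∈ T \ S := mem_sdiff.2 ⟨hT, hi⟩
      rw [chi_update_of_mem p hmem, chi_update_of_mem p hmem, ← sub_mul,
        coordChar_true_sub_false, sdiff_insert]
      ring
    · have hnotMem : i ∉ T \ S := fun h => hT (mem_sdiff.1 h).1
      rw [chi_update_of_notMem p hnotMem, chi_update_of_notMem p hnotMem, sub_self]
  simp only [derivS, ← sum_sub_distrib, ← mul_sub, hterm, sum_div, mul_div_assoc, mul_ite,
    mul_zero, ← sum_filter, filter_filter, insert_subset_iff, and_comm]

lemma exists_int_derivS_div_eq (hp : 0 < p) (hp1 : p < 1) {f : (Fin n → Bool) → ℝ}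
    (hf : ∀ x, ∃ k : ℤ, f x = k) (S : Finset (Fin n)) (x : Fin n → Bool) :
    ∃ k : ℤ, derivS p S f x / sigma p ^ S.card = k := by
  induction S using Finset.induction_on generalizing x with
  | empty => simpa [derivS_empty hp hp1] using hf x
  | insert i S hi ih =>
    obtain ⟨a, ha⟩ := ih (Function.update x i true)
    obtain ⟨b, hb⟩ := ih (Function.update x i false)
    refine ⟨a - b, ?_⟩
    rw [card_insert_of_notMem hi, pow_succ', ← div_div,
      ← derivS_update_true_sub_update_false f hi, sub_div, ha, hb, Int.cast_sub]

lemma Ep_derivS (hp : 0 < p) (hp1 : p < 1) (f : (Fin n → Bool) → ℝ) (S : Finset (Fin n)) :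
    Ep p (derivS p S f) = coeff p f S := by
  have hmean (T : Finset (Fin n)) (hT : T ∈ univ.filter (S ⊆ ·)) :
      Ep p (fun x => coeff p f T * chi p (T \ S) x) = if T = S then coeff p f T else 0 := by
    have hiff : T \ S = ∅ ↔ T = S :=
      sdiff_eq_empty_iff_subset.trans ⟨fun h => h.antisymm (mem_filter.1 hT).2, fun h => h.le⟩
    simp [Ep_const_mul, Ep_chi hp hp1, hiff]
  unfold derivS
  rw [Ep_sum, sum_congr rfl hmean]
  simp

lemma Ep_derivS_sq (hp : 0 < p) (hp1 : p < 1) (f : (Fin n → Bool) → ℝ) (S : Finset (Fin n)) :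
    Ep p (fun x => derivS p S f x ^ 2) = ∑ T ∈ univ.filter (S ⊆ ·), coeff p f T ^ 2 := by
  refine Ep_sum_chi_sq hp hp1 _ _ fun T hT U hU hTU => ?_
  rw [← sdiff_union_of_subset (mem_filter.1 hT).2, ← sdiff_union_of_subset (mem_filter.1 hU).2]
  exact congrArg (· ∪ S) hTU

lemma genInf_eq_Ep_sq (hp : 0 < p) (hp1 : p < 1) (f : (Fin n → Bool) → ℝ)
    (S : Finset (Fin n)) :
    genInf p S f = Ep p (fun x => (derivS p S f x / sigma p ^ S.card) ^ 2) := by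
  rw [genInf, ← Ep_derivS_sq hp hp1, ← sq_sigma hp hp1, pow_right_comm, div_eq_inv_mul,
    ← Ep_const_mul]
  exact congrArg (Ep p) (funext fun x => by rw [div_pow, div_eq_inv_mul])

lemma coeff_le_sigma_pow_mul_genInf (hp : 0 < p) (hp1 : p < 1) {f : (Fin n → Bool) → ℝ}
    (hf : ∀ x, ∃ k : ℤ, f x = k) (S : Finset (Fin n)) :
    coeff p f S ≤ sigma p ^ S.card * genInf p S f := by
  have hmean : Ep p (fun x => derivS p S f x / sigma p ^ S.card) =
      coeff p f S / sigma p ^ S.card := by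
    simp only [div_eq_inv_mul, Ep_const_mul, Ep_derivS hp hp1]
  rw [← div_le_iff₀' (pow_pos (sigma_pos hp hp1) _), genInf_eq_Ep_sq hp hp1, ← hmean]
  refine Ep_mono hp.le hp1.le fun x => ?_
  obtain ⟨k, hk⟩ := exists_int_derivS_div_eq hp hp1 hf S x
  rw [hk]
  exact_mod_cast Int.le_self_sq k

end Derivative

section Restriction

variable {p : ℝ}

lemma Ep_restrict1_chi (p : ℝ) (J S : Finset (Fin n)) :
    Ep p (restrict1 J (chi p S)) =
      if S ⊆ J then coordChar p true ^ S.card else 0 := by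
  let g (i : Fin n) (b : Bool) : ℝ :=
    if i ∈ S then coordChar p (if i ∈ J then true else b) else 1
  have hg (i : Fin n) : p * g i true + (1 - p) * g i false =
      if i ∈ S → i ∈ J then (if i ∈ S then coordChar p true else 1) else 0 := by
    by_cases hS : i ∈ S <;> by_cases hJ : i ∈ J <;> simp [g, hS, hJ, coordChar_mean, ← add_mul]
  calc Ep p (restrict1 J (chi p S)) = Ep p (fun x => ∏ i, g i (x i)) :=
        congrArg (Ep p) (funext fun x => chi_eq_prod_ite p S _)
    _ = ∏ i, if i ∈ S → i ∈ J then (if i ∈ S then coordChar p true else 1) else 0 := by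
        simp only [Ep_prod, hg]
    _ = if S ⊆ J then coordChar p true ^ S.card else 0 := by
        simp [prod_ite_zero, Finset.subset_iff]

lemma Ep_restrict1 (hp : 0 < p) (hp1 : p < 1) (J : Finset (Fin n)) (f : (Fin n → Bool) → ℝ) :
    Ep p (restrict1 J f) = ∑ S ∈ J.powerset, ((1 - p) / sigma p) ^ S.card * coeff p f S := by
  calc Ep p (restrict1 J f)
      = Ep p (fun x => ∑ S, coeff p f S * restrict1 J (chi p S) x) :=
        congrArg (Ep p) (funext fun x => (sum_coeff_mul_chi hp hp1 f _).symm)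
    _ = ∑ S, coeff p f S * if S ⊆ J then coordChar p true ^ S.card else 0 := by
        simp only [Ep_sum, Ep_const_mul, Ep_restrict1_chi]
    _ = ∑ S ∈ J.powerset, ((1 - p) / sigma p) ^ S.card * coeff p f S := by
        simp only [mul_ite, mul_zero, ← sum_filter, filter_subset_univ, coordChar_true, mul_comm]

lemma Ep_restrict1_le (hp : 0 < p) (hp1 : p < 1) {f : (Fin n → Bool) → ℝ}
    (hf : ∀ x, ∃ k : ℤ, f x = k) (J : Finset (Fin n)) :
    Ep p (restrict1 J f) ≤
      Ep p f + ∑ S ∈ J.powerset.erase ∅, (1 - p) ^ S.card * genInf p S f := by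
  rw [Ep_restrict1 hp hp1, ← add_sum_erase _ _ (empty_mem_powerset J), card_empty, pow_zero,
    one_mul, coeff_empty]
  refine add_le_add_right (sum_le_sum fun S _ => ?_) _
  have hσ := sigma_pos hp hp1
  have hratio : 0 ≤ ((1 - p) / sigma p) ^ S.card :=
    pow_nonneg (div_nonneg (sub_pos.2 hp1).le hσ.le) _
  calc ((1 - p) / sigma p) ^ S.card * coeff p f S
      ≤ ((1 - p) / sigma p) ^ S.card * (sigma p ^ S.card * genInf p S f) :=
        mul_le_mul_of_nonneg_left (coeff_le_sigma_pow_mul_genInf hp hp1 hf S) hratio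
    _ = (1 - p) ^ S.card * genInf p S f := by
        rw [← mul_assoc, ← mul_pow, div_mul_cancel₀ _ hσ.ne']

end Restriction

lemma IsGlobal.mono {p r δ δ' : ℝ} {f : (Fin n → Bool) → ℝ} (hf : IsGlobal p r δ f)
    (hδ : δ ≤ δ') : IsGlobal p r δ' f :=
  fun J hJ => (hf J hJ).trans (add_le_add_right hδ _)

theorem statement6_general (p δ : ℝ) (r : ℕ) (hp : 0 < p) (hp1 : p < 1) (hδ : 0 ≤ δ)
    (f : (Fin n → Bool) → ℝ) (hf : ∀ x, ∃ k : ℤ, f x = k)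
    (hinf : ∀ S : Finset (Fin n), S.Nonempty → S.card ≤ r → genInf p S f ≤ δ) :
    IsGlobal p r (((2 - p) ^ r - 1) * δ) f := by
  intro J hJ
  have hJr : J.card ≤ r := by exact_mod_cast hJ
  have hq : 0 < 1 - p := sub_pos.2 hp1
  refine (Ep_restrict1_le hp hp1 hf J).trans ?_
  gcongr
  calc ∑ S ∈ J.powerset.erase ∅, (1 - p) ^ S.card * genInf p S f
      ≤ ∑ S ∈ J.powerset.erase ∅, (1 - p) ^ S.card * δ := by
        refine sum_le_sum fun S hS => mul_le_mul_of_nonneg_left ?_ (pow_nonneg hq.le _)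
        obtain ⟨hne, hSJ⟩ := mem_erase.1 hS
        exact hinf S (nonempty_iff_ne_empty.2 hne)
          ((card_le_card (mem_powerset.1 hSJ)).trans hJr)
    _ = ((2 - p) ^ J.card - 1) * δ := by
        rw [← sum_mul, sum_powerset_erase_empty_pow_card]
        ring
    _ ≤ ((2 - p) ^ r - 1) * δ := by
        gcongr
        linarith

/-- small generalised influences imply globalness. -/
theorem statement6 {n : ℕ} (p δ : ℝ) (r : ℕ) (hp : 0 < p) (hp' : p ≤ 1/2)
    (hr : 1 ≤ r) (hδ : 0 < δ)
    (f : (Fin n → Bool) → ℝ) (hbool : ∀ x, f x = 0 ∨ f x = 1)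
    (hinf : ∀ S : Finset (Fin n), S.Nonempty → S.card ≤ r → genInf p S f ≤ δ) :
    IsGlobal p (r : ℝ) (4 ^ r * δ) f := by
  refine (statement6_general p δ r hp (by linarith) hδ.le f (fun x => ?_) hinf).mono ?_
  · exact (hbool x).elim (fun h => ⟨0, by simp [h]⟩) (fun h => ⟨1, by simp [h]⟩)
  · have hconst : (2 - p) ^ r - 1 ≤ 4 ^ r :=
      (sub_le_self _ zero_le_one).trans (pow_le_pow_left₀ (by linarith) (by linarith) r)
    exact mul_le_mul_of_nonneg_right hconst hδ.le

end GlobalHC
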